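/- arXiv:2109.04531 — 4 statements merged into one kernel-verified Lean document; each statement's English description precedes it below -/
import Mathlib

section
/- Let (X,T,μ) be a topological dynamical system with a T-invariant Borel probability measure μ, and let ξ ∈ S¹ = {z ∈ ℂ : |z| = 1} be such that ξ is not an eigenvalue of the Koopman operator of (X,T,μ). Let R_ξ : S¹ → S¹ be the rotation z ↦ ξ·z and m the Haar probability measure on S¹. Then for every ergodic joining θ of (X,T,μ) and (S¹,R_ξ,m) and every f ∈ L¹(X,μ), the integral ∫_{X×S¹} f(x)·z dθ(x,z) equals 0. -/
open MeasureTheory Filter Topology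

/-- The unit circle in `ℂ`, as a subtype. -/
abbrev UnitCircle : Type := Metric.sphere (0 : ℂ) 1

/-- Rotation of the unit circle by the element `ξ`. -/
def rot (ξ : UnitCircle) (z : UnitCircle) : UnitCircle :=
  ⟨(ξ : ℂ) * (z : ℂ), by
    have hξ : ‖(ξ : ℂ)‖ = 1 := mem_sphere_zero_iff_norm.mp ξ.2
    have hz : ‖(z : ℂ)‖ = 1 := mem_sphere_zero_iff_norm.mp z.2
    simp [mem_sphere_zero_iff_norm, norm_mul, hξ, hz]⟩

/-- `ξ` is an eigenvalue of the Koopman operator of the measure-preserving system `(X, T, μ)`: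
there is a nonzero `f ∈ L²(X, μ)` with `f ∘ T = ξ · f` almost everywhere. -/
def KoopmanEigenvalue {X : Type*} [MeasurableSpace X] (T : X → X) (μ : Measure X)
    (ξ : ℂ) : Prop :=
  ∃ f : Lp ℂ 2 μ, f ≠ 0 ∧ ∀ᵐ x ∂μ, f (T x) = ξ * f x

/-!
Let `J` be the Koopman operator `h ↦ h ∘ π` of a factor map `π` from `(Z, S, θ)` to `(X, T, μ)`.
A contraction and its adjoint have the same eigenvectors for unimodular eigenvalues, up to
conjugating the eigenvalue. Hence, if `φ` is an eigenfunction of `S` with eigenvalue `ξ`, applying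
this to the Koopman operator of `S` and then to the adjoint of that of `T` gives
`(J† φ) ∘ T = ξ · J† φ`. As `ξ` is not an eigenvalue of `T`, `J† φ = 0`. But `(J† φ) ∘ π` is the
conditional expectation of `φ` given `π`, so `φ` is orthogonal to every function of `π`. For the
theorem, take `π (x, z) = x` and `φ (x, z) = z`.
-/

open scoped ENNReal InnerProduct ComplexConjugate

section Contraction

variable {𝕜 E F : Type*} [RCLike 𝕜]
  [NormedAddCommGroup E] [InnerProductSpace 𝕜 E] [CompleteSpace E]
  [NormedAddCommGroup F] [InnerProductSpace 𝕜 F] [CompleteSpace F]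

theorem adjoint_apply_eq_conj_smul_of_norm_le_one {A : E →L[𝕜] E} (hA : ‖A‖ ≤ 1) {ξ : 𝕜}
    (hξ : ‖ξ‖ = 1) {v : E} (hv : A v = ξ • v) : (A†) v = conj ξ • v := by
  have hnorm : ‖conj ξ • v‖ = ‖v‖ := by rw [norm_smul, RCLike.norm_conj, hξ, one_mul]
  have hle : ‖(A†) v‖ ≤ ‖conj ξ • v‖ :=
    hnorm ▸ (A†).le_of_opNorm_le ((ContinuousLinearMap.adjoint.norm_map A).trans_le hA) v
      |>.trans_eq (one_mul _)
  have hinner : inner 𝕜 ((A†) v) (conj ξ • v) = inner 𝕜 v v := by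
    rw [ContinuousLinearMap.adjoint_inner_left, map_smul, hv, smul_smul, RCLike.conj_mul, hξ]
    simp only [RCLike.ofReal_one, one_pow, one_smul]
  refine eq_of_norm_le_re_inner_eq_norm_sq (𝕜 := 𝕜) hle ?_
  rw [hinner, inner_self_eq_norm_sq, hnorm]

theorem apply_adjoint_eq_smul_of_intertwines {J : E →L[𝕜] F} {U : E →L[𝕜] E} {W : F →L[𝕜] F}
    (hU : ‖U‖ ≤ 1) (hW : ‖W‖ ≤ 1) (hJ : W ∘L J = J ∘L U) {ξ : 𝕜} (hξ : ‖ξ‖ = 1) {v : F}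
    (hv : W v = ξ • v) : U ((J†) v) = ξ • (J†) v := by
  have hU' : ‖U†‖ ≤ 1 := (ContinuousLinearMap.adjoint.norm_map U).trans_le hU
  have hξ' : ‖conj ξ‖ = 1 := (RCLike.norm_conj ξ).trans hξ
  have hJ' : J† ∘L W† = U† ∘L J† := by
    rw [← ContinuousLinearMap.adjoint_comp, hJ, ContinuousLinearMap.adjoint_comp]
  have hUJ : (U†) ((J†) v) = conj ξ • (J†) v := by
    rw [← ContinuousLinearMap.comp_apply, ← hJ', ContinuousLinearMap.comp_apply,
      adjoint_apply_eq_conj_smul_of_norm_le_one hW hξ hv, map_smul]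
  simpa only [ContinuousLinearMap.adjoint_adjoint, RCLike.conj_conj] using
    adjoint_apply_eq_conj_smul_of_norm_le_one hU' hξ' hUJ

end Contraction

theorem integral_mul_eq_zero_of_condExp_ae_eq_zero {𝕜 Z : Type*} [RCLike 𝕜]
    {m m₀ : MeasurableSpace Z} {θ : Measure Z} (hm : m ≤ m₀) [SigmaFinite (θ.trim hm)]
    {g φ : Z → 𝕜} (hg : AEStronglyMeasurable[m] g θ) (hφ : Integrable φ θ)
    (hgφ : Integrable (fun z => g z * φ z) θ) (hφ0 : θ[φ | m] =ᵐ[θ] 0) :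
    ∫ z, g z * φ z ∂θ = 0 := by
  have hpull : θ[fun z => g z * φ z | m] =ᵐ[θ] fun z => g z * (θ[φ | m]) z :=
    condExp_bilin_of_aestronglyMeasurable_left (ContinuousLinearMap.mul ℝ 𝕜) hg hgφ hφ
  rw [← integral_condExp hm]
  refine integral_eq_zero_of_ae (hpull.trans ?_)
  filter_upwards [hφ0] with z hz
  rw [hz, Pi.zero_apply, mul_zero]

section Koopman

variable {𝕜 X Y Z : Type*} [RCLike 𝕜] [MeasurableSpace X] [MeasurableSpace Y] [MeasurableSpace Z]
  {μ : Measure X} {ν : Measure Y} {θ : Measure Z}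

variable (𝕜) in
/-- The Koopman operator `h ↦ h ∘ π` from `L²(μ)` to `L²(θ)` of a measure-preserving map `π`. The
map may go between different spaces, so that this covers both the Koopman operator of a system and
the embedding of `L²` of a factor. -/
noncomputable def koopman {π : Z → X} (hπ : MeasurePreserving π θ μ) :
    Lp 𝕜 2 μ →L[𝕜] Lp 𝕜 2 θ :=
  (Lp.compMeasurePreservingₗᵢ 𝕜 π hπ).toContinuousLinearMap

theorem coeFn_koopman {π : Z → X} (hπ : MeasurePreserving π θ μ) (h : Lp 𝕜 2 μ) :
    koopman 𝕜 hπ h =ᵐ[θ] h ∘ π :=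
  Lp.coeFn_compMeasurePreserving h hπ

theorem norm_koopman_le_one {π : Z → X} (hπ : MeasurePreserving π θ μ) : ‖koopman 𝕜 hπ‖ ≤ 1 :=
  LinearIsometry.norm_toContinuousLinearMap_le _

theorem koopman_comp {ρ : Z → Y} {π : Y → X} (hπ : MeasurePreserving π ν μ)
    (hρ : MeasurePreserving ρ θ ν) :
    koopman 𝕜 (hπ.comp hρ) = koopman 𝕜 hρ ∘L koopman 𝕜 hπ :=
  ContinuousLinearMap.ext fun h => Lp.compMeasurePreserving_comp_apply h hπ hρ

theorem koopman_comp_koopman_of_semiconj {S : Z → Z} {T : X → X} {π : Z → X}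
    (hS : MeasurePreserving S θ θ) (hT : MeasurePreserving T μ μ) (hπ : MeasurePreserving π θ μ)
    (hST : Function.Semiconj π S T) :
    koopman 𝕜 hS ∘L koopman 𝕜 hπ = koopman 𝕜 hπ ∘L koopman 𝕜 hT := by
  simp only [← koopman_comp, hST.comp_eq]

theorem koopman_toLp_eq_smul {S : Z → Z} (hS : MeasurePreserving S θ θ) {ξ : 𝕜} {φ : Z → 𝕜}
    (hφ : MemLp φ 2 θ) (hφS : ∀ᵐ z ∂θ, φ (S z) = ξ * φ z) :
    koopman 𝕜 hS (hφ.toLp φ) = ξ • hφ.toLp φ :=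
  MemLp.toLp_congr (hφ.comp_measurePreserving hS) (hφ.const_smul ξ) hφS

theorem koopmanEigenvalue_of_koopman_eq_smul {T : X → X} (hT : MeasurePreserving T μ μ) {ξ : ℂ}
    {g : Lp ℂ 2 μ} (hg : g ≠ 0) (hTg : koopman ℂ hT g = ξ • g) : KoopmanEigenvalue T μ ξ := by
  refine ⟨g, hg, ?_⟩
  filter_upwards [coeFn_koopman hT g, Lp.coeFn_smul ξ g] with x hx hx'
  rw [← Function.comp_apply (f := g), ← hx, hTg, hx', Pi.smul_apply, smul_eq_mul]

theorem setIntegral_adjoint_koopman {π : Z → X} (hπ : MeasurePreserving π θ μ) (φ : Lp 𝕜 2 θ)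
    {s : Set X} (hs : MeasurableSet s) (hμs : μ s ≠ ∞) :
    ∫ x in s, ((koopman 𝕜 hπ)†) φ x ∂μ = ∫ z in π ⁻¹' s, φ z ∂θ := by
  have hθs : θ (π ⁻¹' s) ≠ ∞ := by rwa [hπ.measure_preimage hs.nullMeasurableSet]
  have hind : koopman 𝕜 hπ (indicatorConstLp 2 hs hμs 1) =
      indicatorConstLp 2 (hπ.measurable hs) hθs 1 :=
    Lp.indicatorConstLp_compMeasurePreserving hs hμs 1 hπ
  rw [← L2.inner_indicatorConstLp_one hs hμs, ContinuousLinearMap.adjoint_inner_right, hind,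
    L2.inner_indicatorConstLp_one]

theorem condExp_comap_ae_eq_adjoint_koopman_comp [IsFiniteMeasure θ] {π : Z → X}
    (hπ : MeasurePreserving π θ μ) (φ : Lp 𝕜 2 θ) :
    θ[φ | MeasurableSpace.comap π inferInstance] =ᵐ[θ] ((koopman 𝕜 hπ)†) φ ∘ π := by
  have : IsFiniteMeasure μ := hπ.map_eq ▸ inferInstance
  set g := ((koopman 𝕜 hπ)†) φ
  have hg : Integrable (g ∘ π) θ :=
    hπ.integrable_comp_of_integrable ((Lp.memLp g).integrable one_le_two)
  have hgπ : AEStronglyMeasurable g (θ.map π) := hπ.map_eq ▸ Lp.aestronglyMeasurable g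
  refine (ae_eq_condExp_of_forall_setIntegral_eq hπ.measurable.comap_le
    ((Lp.memLp φ).integrable one_le_two) (fun _ _ _ => hg.integrableOn) ?_
    (hgπ.comp_ae_measurable' hπ.aemeasurable)).symm
  rintro _ ⟨s, hs, rfl⟩ -
  calc ∫ z in π ⁻¹' s, g (π z) ∂θ
      = ∫ x in s, g x ∂μ := by
        rw [← setIntegral_map hs hgπ hπ.aemeasurable, hπ.map_eq]
    _ = ∫ z in π ⁻¹' s, φ z ∂θ := setIntegral_adjoint_koopman hπ φ hs (measure_ne_top μ s)

theorem condExp_comap_ae_eq_zero_of_not_koopmanEigenvalue [IsFiniteMeasure θ]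
    {T : X → X} {S : Z → Z} {π : Z → X} (hT : Measurable T) (hS : MeasurePreserving S θ θ)
    (hπ : MeasurePreserving π θ μ) (hST : Function.Semiconj π S T) {ξ : ℂ} (hξ1 : ‖ξ‖ = 1)
    (hξ : ¬ KoopmanEigenvalue T μ ξ) {φ : Z → ℂ} (hφ : MemLp φ 2 θ)
    (hφS : ∀ᵐ z ∂θ, φ (S z) = ξ * φ z) :
    θ[φ | MeasurableSpace.comap π inferInstance] =ᵐ[θ] 0 := by
  have hTμ : MeasurePreserving T μ μ := hπ.of_semiconj hS hST hT
  set g := ((koopman ℂ hπ)†) (hφ.toLp φ)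
  have heigen : koopman ℂ hTμ g = ξ • g :=
    apply_adjoint_eq_smul_of_intertwines (J := koopman ℂ hπ) (U := koopman ℂ hTμ)
      (W := koopman ℂ hS) (norm_koopman_le_one hTμ) (norm_koopman_le_one hS)
      (koopman_comp_koopman_of_semiconj hS hTμ hπ hST) hξ1 (koopman_toLp_eq_smul hS hφ hφS)
  have hzero : g = 0 :=
    by_contra fun hne => hξ (koopmanEigenvalue_of_koopman_eq_smul hTμ hne heigen)
  calc θ[φ | MeasurableSpace.comap π inferInstance]
      =ᵐ[θ] θ[hφ.toLp φ | MeasurableSpace.comap π inferInstance] :=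
        condExp_congr_ae hφ.coeFn_toLp.symm
    _ =ᵐ[θ] g ∘ π := condExp_comap_ae_eq_adjoint_koopman_comp hπ (hφ.toLp φ)
    _ =ᵐ[θ] 0 := by
      rw [hzero]
      exact hπ.quasiMeasurePreserving.ae (Lp.coeFn_zero ℂ 2 μ)

end Koopman

section Circle

variable {X : Type*} [MeasurableSpace X] {μ : Measure X} {θ : Measure (X × UnitCircle)}

theorem aestronglyMeasurable_coe_snd :
    AEStronglyMeasurable (fun p : X × UnitCircle => (p.2 : ℂ)) θ :=
  (measurable_subtype_coe.comp measurable_snd).aestronglyMeasurable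

theorem memLp_coe_snd [IsFiniteMeasure θ] (q : ℝ≥0∞) :
    MemLp (fun p : X × UnitCircle => (p.2 : ℂ)) q θ :=
  .of_bound aestronglyMeasurable_coe_snd 1 (ae_of_all _ fun p => (norm_eq_of_mem_sphere p.2).le)

theorem integrable_comp_fst_mul_coe_snd (hθ : MeasurePreserving Prod.fst θ μ) {f : X → ℂ}
    (hf : Integrable f μ) : Integrable (fun p : X × UnitCircle => f p.1 * (p.2 : ℂ)) θ :=
  (hθ.integrable_comp_of_integrable hf).mul_bdd (c := 1) aestronglyMeasurable_coe_snd
    (ae_of_all _ fun p => (norm_eq_of_mem_sphere p.2).le)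

end Circle

theorem statement_3_general {X Z : Type*} [MeasurableSpace X] [MeasurableSpace Z]
    {T : X → X} {S : Z → Z} {π : Z → X} {μ : Measure X} {θ : Measure Z} [IsFiniteMeasure θ]
    (hT : Measurable T) (hS : MeasurePreserving S θ θ) (hπ : MeasurePreserving π θ μ)
    (hST : Function.Semiconj π S T) {ξ : ℂ} (hξ1 : ‖ξ‖ = 1) (hξ : ¬ KoopmanEigenvalue T μ ξ)
    {φ : Z → ℂ} (hφ : MemLp φ 2 θ) (hφS : ∀ᵐ z ∂θ, φ (S z) = ξ * φ z)
    {f : X → ℂ} (hf : AEStronglyMeasurable f μ) (hfφ : Integrable (fun z => f (π z) * φ z) θ) :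
    ∫ z, f (π z) * φ z ∂θ = 0 := by
  have hfπ : AEStronglyMeasurable[.comap π inferInstance] (f ∘ π) θ :=
    (hπ.map_eq.symm ▸ hf).comp_ae_measurable' hπ.aemeasurable
  exact integral_mul_eq_zero_of_condExp_ae_eq_zero hπ.measurable.comap_le hfπ
    (hφ.integrable one_le_two) hfφ
    (condExp_comap_ae_eq_zero_of_not_koopmanEigenvalue hT hS hπ hST hξ1 hξ hφ hφS)

theorem statement_3
    {X : Type*} [MetricSpace X] [CompactSpace X] [MeasurableSpace X] [BorelSpace X]
    (T : X → X) (hT : Continuous T)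
    (μ : Measure X) [IsProbabilityMeasure μ] (hμ : μ.map T = μ)
    (ξ : UnitCircle) (hξ : ¬ KoopmanEigenvalue T μ (ξ : ℂ))
    (m : Measure UnitCircle) [IsProbabilityMeasure m]
    (hm : ∀ ζ : UnitCircle, m.map (rot ζ) = m)
    (θ : Measure (X × UnitCircle)) [IsProbabilityMeasure θ]
    (hθ : Ergodic (Prod.map T (rot ξ)) θ)
    (hθX : θ.map Prod.fst = μ) (hθY : θ.map Prod.snd = m)
    (f : Lp ℂ 1 μ) :
    ∫ p : X × UnitCircle, f p.1 * (p.2 : ℂ) ∂θ = 0 := by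
  have hfst : MeasurePreserving Prod.fst θ μ := ⟨measurable_fst, hθX⟩
  exact statement_3_general hT.measurable hθ.toMeasurePreserving hfst (fun _ => rfl)
    (norm_eq_of_mem_sphere ξ) hξ (memLp_coe_snd 2) (ae_of_all _ fun _ => rfl)
    (Lp.aestronglyMeasurable f) (integrable_comp_fst_mul_coe_snd hfst (L1.integrable_coeFn f))
end

section
/- Let Λ be a finite set, L > 2 an integer, X ⊆ Λ^ℤ a topologically mixing shift of finite type, W a word allowable in X, and K > 0 an integer such that for any words α, β allowable in X and any l ≥ K there exists an allowable word αwβ where w is a word of length l containing W as a subword. Then the subshift X_{L,W,K} ⊆ X consisting of all points of X in which every window of LK consecutive coordinates contains W as a subword is a nonempty topologically mixing shift of finite type. -/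
open Filter Finset Topology

/-- The left shift on two-sided sequences. -/
def shiftZ {Λ : Type*} (x : ℤ → Λ) : ℤ → Λ := fun n => x (n + 1)

/-- The word `w` occurs in `x` starting at coordinate `m`. -/
def OccursAt {Λ : Type*} (w : List Λ) (x : ℤ → Λ) (m : ℤ) : Prop :=
  ∀ i : Fin w.length, x (m + (i : ℕ)) = w.get i

/-- The word `w` occurs somewhere in `x`. -/
def OccursIn {Λ : Type*} (w : List Λ) (x : ℤ → Λ) : Prop :=
  ∃ m : ℤ, OccursAt w x m

/-- The word `w` is allowable in `X`: it appears in some point of `X`. -/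
def AllowableIn {Λ : Type*} (X : Set (ℤ → Λ)) (w : List Λ) : Prop :=
  ∃ x ∈ X, OccursIn w x

/-- `X` is a subshift: a closed shift-invariant subset of the full shift. -/
def IsSubshift {Λ : Type*} [TopologicalSpace Λ] (X : Set (ℤ → Λ)) : Prop :=
  IsClosed X ∧ shiftZ '' X = X

/-- `X` is a shift of finite type: a subshift defined by excluding a finite set of
forbidden words. -/
def IsSFT {Λ : Type*} [TopologicalSpace Λ] (X : Set (ℤ → Λ)) : Prop :=
  IsSubshift X ∧ ∃ F : Finset (List Λ), X = {x | ∀ w ∈ F, ¬ OccursIn w x}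

/-- `X` is topologically mixing (as a subspace system): for any two relatively open nonempty
subsets `U ∩ X`, `V ∩ X` there is `N` such that `σⁿ(U ∩ X)` meets `V ∩ X` for all `n ≥ N`. -/
def MixingSubshift {Λ : Type*} [TopologicalSpace Λ] (X : Set (ℤ → Λ)) : Prop :=
  ∀ U V : Set (ℤ → Λ), IsOpen U → IsOpen V →
    (U ∩ X).Nonempty → (V ∩ X).Nonempty →
    ∃ N : ℕ, ∀ n ≥ N, (shiftZ^[n] '' (U ∩ X) ∩ (V ∩ X)).Nonempty

/-- The subset of `X` of all points in which every window of `M` consecutive coordinates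
contains the word `W`. -/
def WindowSet {Λ : Type*} (X : Set (ℤ → Λ)) (W : List Λ) (M : ℕ) : Set (ℤ → Λ) :=
  {x ∈ X | ∀ m : ℤ, ∃ j : ℤ, m ≤ j ∧ j + W.length ≤ m + M ∧ OccursAt W x j}

/-!
Two points `x`, `y` of a shift of finite type `X` can be spliced as soon as they agree on a long
enough interval. Applied on both sides of a bridging word, this turns the hypothesis on words into
one on points: for any gap `[a, b)` with `a + K ≤ b`, some point of `X` agrees with `x` before `a`
and with `y` from `b` on, and sees `W` inside the gap. Cutting a long gap into pieces of length `K`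
and a last one of length less than `2 * K`, and filling them one after the other, makes `W` occur
in every window of length `3 * K` over the gap. Letting the gap exhaust `ℤ`, compactness gives a
point of the window set. Choosing the ends of the gap next to occurrences of `W` in two given
points of the window set keeps the glued point in the window set, as mixing requires.
-/

section Words

variable {Λ : Type*} {w u v : List Λ} {x y : ℤ → Λ} {a b m : ℤ} {n : ℕ}

/-- The word `x_m x_{m+1} ⋯ x_{m+n-1}` read off the sequence `x`. -/
def block (x : ℤ → Λ) (m : ℤ) (n : ℕ) : List Λ :=
  List.ofFn fun i : Fin n => x (m + (i : ℕ))

@[simp]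
theorem length_block : (block x m n).length = n :=
  List.length_ofFn

theorem occursAt_iff_block_eq : OccursAt w x m ↔ block x m w.length = w := by
  conv_rhs => rhs; rw [← List.ofFn_get w]
  exact funext_iff.symm.trans List.ofFn_injective.eq_iff.symm

theorem occursAt_block : OccursAt (block x m n) x m := by
  rw [occursAt_iff_block_eq, length_block]

theorem block_eq_block_iff :
    block x m n = block y m n ↔ Set.EqOn x y (Set.Ico m (m + n)) := by
  rw [block, block, List.ofFn_injective.eq_iff, funext_iff]
  refine ⟨fun h k ⟨hmk, hkn⟩ => ?_, fun h i => h ⟨by omega, by omega⟩⟩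
  simpa [hmk] using h ⟨(k - m).toNat, by omega⟩

theorem block_add (x : ℤ → Λ) (m : ℤ) (p q : ℕ) :
    block x m (p + q) = block x m p ++ block x (m + p) q := by
  simp [block, List.ofFn_add, add_assoc]

theorem occursAt_append :
    OccursAt (u ++ v) x m ↔ OccursAt u x m ∧ OccursAt v x (m + u.length) := by
  simp only [occursAt_iff_block_eq, List.length_append, block_add]
  exact ⟨fun h => List.append_inj h length_block, fun h => by rw [h.1, h.2]⟩

theorem OccursAt.congr (h : OccursAt w x m) (hxy : Set.EqOn x y (Set.Ico m (m + w.length))) :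
    OccursAt w y m := by
  rw [occursAt_iff_block_eq] at h ⊢
  rw [← block_eq_block_iff.2 hxy, h]

/-- The word `w` occurs in `x` inside the half-open interval `[a, b)`. -/
def OccursWithin (w : List Λ) (x : ℤ → Λ) (a b : ℤ) : Prop :=
  ∃ j : ℤ, a ≤ j ∧ j + w.length ≤ b ∧ OccursAt w x j

theorem OccursWithin.mono {a' b' : ℤ} (h : OccursWithin w x a b) (ha : a' ≤ a) (hb : b ≤ b') :
    OccursWithin w x a' b' := by
  obtain ⟨j, haj, hjb, hj⟩ := h
  exact ⟨j, ha.trans haj, hjb.trans hb, hj⟩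

theorem OccursWithin.congr (h : OccursWithin w x a b) (hxy : Set.EqOn x y (Set.Ico a b)) :
    OccursWithin w y a b := by
  obtain ⟨j, haj, hjb, hj⟩ := h
  exact ⟨j, haj, hjb, hj.congr (hxy.mono (Set.Ico_subset_Ico haj hjb))⟩

theorem OccursAt.occursWithin_of_isInfix (h : OccursAt v x m) (hw : w <:+: v) :
    OccursWithin w x m (m + v.length) := by
  obtain ⟨s, t, rfl⟩ := hw
  rw [occursAt_append, occursAt_append] at h
  refine ⟨m + s.length, by omega, ?_, h.1.2⟩
  simp only [List.length_append]
  omega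

theorem occursWithin_iff_isInfix_block :
    OccursWithin w x m (m + n) ↔ w <:+: block x m n := by
  constructor
  · rintro ⟨j, hmj, hjn, hj⟩
    obtain ⟨p, rfl⟩ : ∃ p : ℕ, j = m + p := ⟨(j - m).toNat, by omega⟩
    obtain ⟨q, rfl⟩ : ∃ q : ℕ, n = p + w.length + q := Nat.exists_eq_add_of_le (by omega)
    rw [occursAt_iff_block_eq] at hj
    rw [block_add, block_add, hj]
    exact ⟨_, _, rfl⟩
  · intro h
    simpa only [length_block] using (occursAt_block (x := x)).occursWithin_of_isInfix h

end Words

section Shift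

variable {Λ : Type*} {w : List Λ} {x : ℤ → Λ}

theorem shiftZ_eq_translate (x : ℤ → Λ) : shiftZ x = translate (-1) x := by
  funext k
  simp [shiftZ]

theorem shiftZ_iterate_eq_translate (n : ℕ) (x : ℤ → Λ) : shiftZ^[n] x = translate (-n : ℤ) x := by
  induction n with
  | zero => simp
  | succ n ih =>
    rw [Function.iterate_succ_apply', ih, shiftZ_eq_translate, translate_translate]
    push_cast
    ring_nf

theorem occursAt_translate {d m : ℤ} : OccursAt w (translate d x) m ↔ OccursAt w x (m - d) := by
  simp only [OccursAt, translate_apply, add_sub_right_comm]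

theorem occursIn_translate {d : ℤ} : OccursIn w (translate d x) ↔ OccursIn w x := by
  simp only [OccursIn, occursAt_translate]
  exact (Equiv.subRight d).exists_congr_right (q := OccursAt w x)

end Shift

section FiniteType

variable {Λ : Type*} {X Y : Set (ℤ → Λ)}

/-- The sequences in which no word of `F` occurs. -/
def avoiding (F : Set (List Λ)) : Set (ℤ → Λ) := {x | ∀ w ∈ F, ¬ OccursIn w x}

theorem avoiding_union (F G : Set (List Λ)) : avoiding (F ∪ G) = avoiding F ∩ avoiding G := by
  ext x
  simp [avoiding, or_imp, forall_and]

theorem translate_mem_avoiding {F : Set (List Λ)} {x : ℤ → Λ} (hx : x ∈ avoiding F) (d : ℤ) :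
    translate d x ∈ avoiding F :=
  fun w hw h => hx w hw (occursIn_translate.1 h)

theorem setOf_forall_occursWithin_eq_avoiding (W : List Λ) (M : ℕ) :
    {x | ∀ m : ℤ, OccursWithin W x m (m + M)} = avoiding {w | w.length = M ∧ ¬ W <:+: w} := by
  ext x
  constructor
  · rintro h _ ⟨rfl, hw⟩ ⟨m, hm⟩
    rw [occursAt_iff_block_eq] at hm
    exact hw (hm ▸ occursWithin_iff_isInfix_block.1 (h m))
  · intro h m
    by_contra hm
    exact h _ ⟨length_block, mt occursWithin_iff_isInfix_block.2 hm⟩ ⟨m, occursAt_block⟩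

variable [TopologicalSpace Λ]

theorem IsSFT.exists_eq_avoiding (hX : IsSFT X) : ∃ F : Finset (List Λ), X = avoiding F :=
  hX.2

theorem IsSFT.translate_mem (hX : IsSFT X) {x : ℤ → Λ} (hx : x ∈ X) (d : ℤ) :
    translate d x ∈ X := by
  obtain ⟨F, rfl⟩ := hX.exists_eq_avoiding
  exact translate_mem_avoiding hx d

theorem IsSFT.exists_splice (hX : IsSFT X) :
    ∃ r : ℕ, ∀ x ∈ X, ∀ y ∈ X, ∀ a : ℤ, Set.EqOn x y (Set.Ico a (a + r)) →
      ∃ z ∈ X, Set.EqOn z x (Set.Iio (a + r)) ∧ Set.EqOn z y (Set.Ici a) := by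
  obtain ⟨F, rfl⟩ := hX.exists_eq_avoiding
  refine ⟨F.sup List.length, fun x hx y hy a hxy => ?_⟩
  set r := F.sup List.length
  let z : ℤ → Λ := fun k => if k < a + r then x k else y k
  have hzx : Set.EqOn z x (Set.Iio (a + r)) := fun k hk => if_pos hk
  have hzy : Set.EqOn z y (Set.Ici a) := fun k hk => by
    by_cases hkr : k < a + r
    · exact (hzx hkr).trans (hxy ⟨hk, hkr⟩)
    · exact if_neg hkr
  refine ⟨z, ?_, hzx, hzy⟩
  rintro w hw ⟨q, hq⟩
  have hwr : w.length ≤ r := Finset.le_sup (f := List.length) hw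
  rcases lt_or_ge q a with hqa | haq
  · exact hx w hw ⟨q, hq.congr (hzx.mono fun k hk => by
      simp only [Set.mem_Ico, Set.mem_Iio] at hk ⊢; omega)⟩
  · exact hy w hw ⟨q, hq.congr (hzy.mono fun k hk => haq.trans hk.1)⟩

theorem exists_forall_eqOn_Icc_mem {U : Set (ℤ → Λ)} (hU : IsOpen U) {x : ℤ → Λ} (hx : x ∈ U) :
    ∃ r : ℕ, ∀ z : ℤ → Λ, Set.EqOn z x (Set.Icc (-r) r) → z ∈ U := by
  obtain ⟨I, u, hu, hIU⟩ := isOpen_pi_iff.1 hU x hx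
  refine ⟨I.sup Int.natAbs, fun z hz => hIU fun k hk => ?_⟩
  have hkr : k.natAbs ≤ I.sup Int.natAbs := Finset.le_sup hk
  rw [hz ⟨by omega, by omega⟩]
  exact (hu k hk).2

theorem IsSFT.mixingSubshift_of_exists_eqOn (hX : IsSFT X)
    (h : ∀ x ∈ X, ∀ y ∈ X, ∀ r : ℕ, ∃ N : ℕ, ∀ n ≥ N, ∃ z ∈ X,
      Set.EqOn z x (Set.Iic r) ∧ Set.EqOn z (translate (n : ℤ) y) (Set.Ici (n - r))) :
    MixingSubshift X := by
  rintro U V hU hV ⟨x, hxU, hx⟩ ⟨y, hyV, hy⟩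
  obtain ⟨p, hp⟩ := exists_forall_eqOn_Icc_mem hU hxU
  obtain ⟨q, hq⟩ := exists_forall_eqOn_Icc_mem hV hyV
  obtain ⟨N, hN⟩ := h x hx y hy (max p q)
  refine ⟨N, fun n hn => ?_⟩
  obtain ⟨z, hz, hzx, hzy⟩ := hN n hn
  have hzU : z ∈ U := hp z (hzx.mono fun k hk => by
    simp only [Set.mem_Icc, Set.mem_Iic] at hk ⊢; omega)
  have hzV : translate (-n : ℤ) z ∈ V := hq _ fun k hk => by
    have hkn : k + n ∈ Set.Ici (n - (max p q : ℕ) : ℤ) := by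
      simp only [Set.mem_Icc, Set.mem_Ici] at hk ⊢; omega
    simpa using hzy hkn
  exact ⟨_, ⟨z, ⟨hzU, hz⟩, shiftZ_iterate_eq_translate n z⟩, hzV, hX.translate_mem hz _⟩

variable [DiscreteTopology Λ]

theorem isClopen_setOf_occursAt (w : List Λ) (m : ℤ) : IsClopen {x : ℤ → Λ | OccursAt w x m} := by
  simp only [OccursAt, Set.ofPred_forall]
  exact isClopen_iInter_of_finite fun i =>
    (isClopen_discrete {w.get i}).preimage (continuous_apply (m + (i : ℕ)))

theorem isClosed_setOf_occursWithin (w : List Λ) (a b : ℤ) :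
    IsClosed {x : ℤ → Λ | OccursWithin w x a b} := by
  have hunion : {x : ℤ → Λ | OccursWithin w x a b} =
      ⋃ j ∈ Set.Icc a (b - w.length), {x | OccursAt w x j} := by
    ext x
    simp [OccursWithin, le_sub_iff_add_le, and_assoc]
  rw [hunion]
  exact (Set.finite_Icc _ _).isClosed_biUnion fun j _ => (isClopen_setOf_occursAt w j).isClosed

theorem isSubshift_avoiding (F : Set (List Λ)) : IsSubshift (avoiding F) := by
  constructor
  · simp only [avoiding, OccursIn, not_exists, Set.ofPred_forall]
    exact isClosed_iInter fun w => isClosed_iInter fun _ => isClosed_iInter fun m =>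
      (isClopen_setOf_occursAt w m).compl.isClosed
  · refine Set.Subset.antisymm ?_ fun x hx => ⟨translate 1 x, translate_mem_avoiding hx 1, ?_⟩
    · rintro _ ⟨x, hx, rfl⟩
      rw [shiftZ_eq_translate]
      exact translate_mem_avoiding hx (-1)
    · rw [shiftZ_eq_translate, translate_translate, neg_add_cancel, translate_zero]

theorem isSFT_avoiding {F : Set (List Λ)} (hF : F.Finite) : IsSFT (avoiding F) :=
  ⟨isSubshift_avoiding F, hF.toFinset, by simp [avoiding]⟩

theorem IsSFT.inter (hX : IsSFT X) (hY : IsSFT Y) : IsSFT (X ∩ Y) := by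
  obtain ⟨F, rfl⟩ := hX.exists_eq_avoiding
  obtain ⟨G, rfl⟩ := hY.exists_eq_avoiding
  rw [← avoiding_union]
  exact isSFT_avoiding (F.finite_toSet.union G.finite_toSet)

theorem IsSFT.windowSet [Finite Λ] (hX : IsSFT X) (W : List Λ) (M : ℕ) :
    IsSFT (WindowSet X W M) := by
  have hwindows : IsSFT {x : ℤ → Λ | ∀ m : ℤ, OccursWithin W x m (m + M)} := by
    rw [setOf_forall_occursWithin_eq_avoiding]
    exact isSFT_avoiding ((List.finite_length_eq Λ M).subset fun w hw => hw.1)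
  exact hX.inter hwindows

end FiniteType

section Gluing

variable {Λ : Type*} {X : Set (ℤ → Λ)} {W : List Λ} {K M : ℕ}

/-- Any two words allowable in `X` can be joined by a word of any prescribed length `l ≥ K` that
contains `W`. -/
def HasBridges (X : Set (ℤ → Λ)) (W : List Λ) (K : ℕ) : Prop :=
  ∀ α β : List Λ, AllowableIn X α → AllowableIn X β → ∀ l ≥ K,
    ∃ w : List Λ, w.length = l ∧ W <:+: w ∧ AllowableIn X (α ++ w ++ β)

/-- The counterpart of `HasBridges` for points: the past of a point of `X` and the future of
another one can be glued across any gap `[a, b)` of length at least `K`, with `W` occurring inside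
the gap. -/
def HasGluing (X : Set (ℤ → Λ)) (W : List Λ) (K : ℕ) : Prop :=
  ∀ x ∈ X, ∀ y ∈ X, ∀ a b : ℤ, a + K ≤ b →
    ∃ z ∈ X, Set.EqOn z x (Set.Iio a) ∧ Set.EqOn z y (Set.Ici b) ∧ OccursWithin W z a b

theorem IsSFT.exists_mem_bridging [TopologicalSpace Λ] (hX : IsSFT X) (h : HasBridges X W K)
    {x y : ℤ → Λ} (hx : x ∈ X) (hy : y ∈ X) {a b : ℤ} (hab : a + K ≤ b) (r : ℕ) :
    ∃ u ∈ X, Set.EqOn u x (Set.Ico (a - r) a) ∧ Set.EqOn u y (Set.Ico b (b + r)) ∧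
      OccursWithin W u a b := by
  obtain ⟨w, hwl, hWw, u, hu, p, hp⟩ := h (block x (a - r) r) (block y b r)
    ⟨x, hx, _, occursAt_block⟩ ⟨y, hy, _, occursAt_block⟩ (b - a).toNat (by omega)
  have hu_occ : OccursAt (block x (a - r) r ++ w ++ block y b r)
      (translate (a - r - p) u) (a - r) := by
    rwa [occursAt_translate, sub_sub_cancel]
  have hwb : a + w.length = b := by omega
  simp only [occursAt_append, List.length_append, length_block, Nat.cast_add, ← add_assoc,
    sub_add_cancel, hwb] at hu_occ
  obtain ⟨⟨hα, hw⟩, hβ⟩ := hu_occ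
  rw [occursAt_iff_block_eq, length_block, block_eq_block_iff] at hα hβ
  rw [sub_add_cancel] at hα
  exact ⟨_, hX.translate_mem hu _, hα, hβ, hwb ▸ hw.occursWithin_of_isInfix hWw⟩

theorem HasBridges.hasGluing [TopologicalSpace Λ] (h : HasBridges X W K) (hX : IsSFT X) :
    HasGluing X W K := by
  intro x hx y hy a b hab
  obtain ⟨r, hsplice⟩ := hX.exists_splice
  obtain ⟨u, hu, hux, huy, hWu⟩ := hX.exists_mem_bridging h hx hy hab r
  obtain ⟨v, hv, hvx, hvu⟩ := hsplice x hx u hu (a - r) (by simpa using hux.symm)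
  rw [sub_add_cancel] at hvx
  have hvy : Set.EqOn v y (Set.Ico b (b + r)) :=
    (hvu.mono (Set.Ico_subset_Ici_self.trans (Set.Ici_subset_Ici.2 (by omega)))).trans huy
  obtain ⟨z, hz, hzv, hzy⟩ := hsplice v hv y hy b hvy
  have hzx : Set.EqOn z x (Set.Iio a) :=
    (hzv.mono (Set.Iio_subset_Iio (by omega))).trans hvx
  have hzu : Set.EqOn z u (Set.Ico a b) :=
    (hzv.mono (Set.Ico_subset_Iio_self.trans (Set.Iio_subset_Iio (by omega)))).trans
      (hvu.mono (Set.Ico_subset_Ici_self.trans (Set.Ici_subset_Ici.2 (by omega))))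
  exact ⟨z, hz, hzx, hzy, hWu.congr hzu.symm⟩

theorem HasGluing.length_le (h : HasGluing X W K) (hX : X.Nonempty) : W.length ≤ K := by
  obtain ⟨x, hx⟩ := hX
  obtain ⟨-, -, -, -, j, hj, hjK, -⟩ := h x hx x hx 0 (0 + K) le_rfl
  omega

/-- The windows considered may exceed the gap `[a, b)` by `K` on either side: they still contain its
first or last piece. In a longer overhang there is room for an occurrence of `W` that borders the
gap. -/
theorem HasGluing.exists_forall_occursWithin (h : HasGluing X W K) (hK : 0 < K)
    {x y : ℤ → Λ} (hx : x ∈ X) (hy : y ∈ X) {a b : ℤ} (hab : a + K ≤ b) :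
    ∃ z ∈ X, Set.EqOn z x (Set.Iio a) ∧ Set.EqOn z y (Set.Ici b) ∧
      ∀ m, a - K ≤ m → m + 2 * K ≤ b → OccursWithin W z m (m + 3 * K) := by
  induction hd : (b - a).toNat using Nat.strong_induction_on generalizing x a with
  | _ d ih =>
    rcases lt_or_ge b (a + 2 * K) with hshort | hlong
    · obtain ⟨z, hz, hzx, hzy, hWz⟩ := h x hx y hy a b hab
      exact ⟨z, hz, hzx, hzy, fun m ham hmb => hWz.mono (by omega) (by omega)⟩
    · obtain ⟨x', hx', hxx', -, hWx'⟩ := h x hx x hx a (a + K) le_rfl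
      obtain ⟨z, hz, hzx', hzy, hWz⟩ :=
        ih (b - (a + K)).toNat (by omega) hx' (a := a + K) (by omega) rfl
      have hWz_first : OccursWithin W z a (a + K) :=
        hWx'.congr (hzx'.symm.mono Set.Ico_subset_Iio_self)
      have hzx : Set.EqOn z x (Set.Iio a) :=
        (hzx'.mono (Set.Iio_subset_Iio (by omega))).trans hxx'
      refine ⟨z, hz, hzx, hzy, fun m ham hmb => ?_⟩
      rcases lt_or_ge m a with hma | ham'
      · exact hWz_first.mono hma.le (by omega)
      · exact hWz m (by omega) hmb

theorem HasGluing.windowSet_nonempty [Finite Λ] [TopologicalSpace Λ] [DiscreteTopology Λ]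
    (h : HasGluing X W K) (hX : IsClosed X) (hne : X.Nonempty) (hK : 0 < K) (hM : 3 * K ≤ M) :
    (WindowSet X W M).Nonempty := by
  have hinter : WindowSet X W M = X ∩ ⋂ m : ℤ, {x | OccursWithin W x m (m + M)} := by
    ext x
    simp [WindowSet, OccursWithin]
  rw [hinter]
  refine hX.isCompact.inter_iInter_nonempty _
    (fun m => isClosed_setOf_occursWithin W m (m + M)) fun s => ?_
  obtain ⟨x, hx⟩ := hne
  obtain ⟨a, ha⟩ := s.bddBelow
  obtain ⟨b, hb⟩ := s.bddAbove
  obtain ⟨z, hz, -, -, hWz⟩ :=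
    h.exists_forall_occursWithin hK hx hx (le_max_left (a + K) (b + 2 * K))
  refine ⟨z, hz, Set.mem_iInter₂.2 fun m hm => (hWz m ?_ ?_).mono le_rfl (by omega)⟩
  · have := ha hm
    omega
  · have := hb hm
    omega

theorem HasGluing.exists_mem_windowSet (h : HasGluing X W K) (hK : 0 < K) (hM : 3 * K ≤ M)
    {x y : ℤ → Λ} (hx : x ∈ WindowSet X W M) (hy : y ∈ WindowSet X W M) {i j : ℤ}
    (hi : OccursAt W x i) (hj : OccursAt W y j) (hij : i + W.length + K ≤ j) :
    ∃ z ∈ WindowSet X W M, Set.EqOn z x (Set.Iio (i + W.length)) ∧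
      Set.EqOn z y (Set.Ici j) := by
  have hWK : W.length ≤ K := h.length_le ⟨x, hx.1⟩
  obtain ⟨z, hz, hzx, hzy, hWz⟩ := h.exists_forall_occursWithin hK hx.1 hy.1 hij
  have hzi : OccursAt W z i := hi.congr (hzx.symm.mono Set.Ico_subset_Iio_self)
  have hzj : OccursAt W z j := hj.congr (hzy.symm.mono Set.Ico_subset_Ici_self)
  refine ⟨z, ⟨hz, fun m => ?_⟩, hzx, hzy⟩
  change OccursWithin W z m (m + M)
  by_cases hpast : m + M ≤ i + W.length
  · exact OccursWithin.congr (hx.2 m) fun k hk => (hzx (hk.2.trans_le hpast)).symm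
  by_cases hstart : m ≤ i
  · exact ⟨i, hstart, by omega, hzi⟩
  by_cases hgap : m + 2 * K ≤ j
  · exact (hWz m (by omega) hgap).mono le_rfl (by omega)
  by_cases hend : m ≤ j
  · exact ⟨j, hend, by omega, hzj⟩
  · exact OccursWithin.congr (hy.2 m) fun k hk => (hzy ((not_le.1 hend).le.trans hk.1)).symm

theorem HasGluing.mixingSubshift_windowSet [TopologicalSpace Λ] [DiscreteTopology Λ]
    (h : HasGluing X W K) (hsft : IsSFT (WindowSet X W M)) (hK : 0 < K) (hM : 3 * K ≤ M) :
    MixingSubshift (WindowSet X W M) := by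
  refine hsft.mixingSubshift_of_exists_eqOn fun x hx y hy r => ?_
  obtain ⟨i, hri, -, hi⟩ := hx.2 (r + 1)
  obtain ⟨j, -, hjr, hj⟩ := hy.2 (-r - M)
  refine ⟨(i + W.length + K - j).toNat, fun n hn => ?_⟩
  have hjn : OccursAt W (translate (n : ℤ) y) (j + n) := by
    rwa [occursAt_translate, add_sub_cancel_right]
  obtain ⟨z, hz, hzx, hzy⟩ :=
    h.exists_mem_windowSet hK hM hx (hsft.translate_mem hy n) hi hjn (by omega)
  refine ⟨z, hz, hzx.mono (Set.Iic_subset_Iio.2 (by omega)),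
    hzy.mono (Set.Ici_subset_Ici.2 (by omega))⟩

end Gluing

theorem statement_6_general {Λ : Type*} [Finite Λ] [TopologicalSpace Λ] [DiscreteTopology Λ]
    {X : Set (ℤ → Λ)} (hX : IsSFT X) (hne : X.Nonempty) {W : List Λ} {K M : ℕ} (hK : 0 < K)
    (hM : 3 * K ≤ M) (hbridges : HasBridges X W K) :
    (WindowSet X W M).Nonempty ∧ IsSFT (WindowSet X W M) ∧ MixingSubshift (WindowSet X W M) := by
  have hglue : HasGluing X W K := hbridges.hasGluing hX
  have hsft : IsSFT (WindowSet X W M) := hX.windowSet W M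
  exact ⟨hglue.windowSet_nonempty hX.1.1 hne hK hM, hsft, hglue.mixingSubshift_windowSet hsft hK hM⟩

theorem statement_6
    {Λ : Type*} [Fintype Λ] [TopologicalSpace Λ] [DiscreteTopology Λ] [DecidableEq Λ]
    (X : Set (ℤ → Λ)) (hSFT : IsSFT X) (hmix : MixingSubshift X)
    (W : List Λ) (hW : AllowableIn X W)
    (L K : ℕ) (hL : 2 < L) (hK : 0 < K)
    (hKspec : ∀ α β : List Λ, AllowableIn X α → AllowableIn X β → ∀ l ≥ K,
      ∃ w : List Λ, w.length = l ∧ W <:+: w ∧ AllowableIn X (α ++ w ++ β)) :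
    (WindowSet X W (L * K)).Nonempty ∧ IsSFT (WindowSet X W (L * K)) ∧
      MixingSubshift (WindowSet X W (L * K)) := by
  exact statement_6_general hSFT (hW.imp fun _ hx => hx.1) hK (Nat.mul_le_mul_right K hL) hKspec
end

section
/- Let 0 < r < 1, let (X,d) be a compact metric space, and let (X,T) be a topological dynamical system of topological entropy h > 0. Then for every sufficiently small ε > 0 and every large enough l there exist two different orbit segments x, Tx, …, T^{l−1}x and y, Ty, …, T^{l−1}y such that the ε-overlap between them and the ε-self-overlaps of each of them are all smaller than r·l. -/
/-!
Let `N(δ, n)` be the least number of sets of diameter at most `δ` for the Bowen metric `d_n` that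
cover `X`. Counting by diameters, rather than by balls around centres, makes `N(δ, ·)`
submultiplicative without any loss of scale, so `N(δ, n)` grows like `exp (n * H(δ))` and is at
least `exp (n * H(δ))` for every `n`.

Overlapping in at least `r * l` places means shadowing after a shift `p ≤ (1 - r) * l`. If the
segment of `y` overlaps that of a given `x` with shift `p`, then up to `2 * ε` it is determined by
a window of length `p`. If it overlaps itself with shift `p`, it is nearly `p`-periodic; the error
grows by `ε` per period, so a window of length `p` is needed only once every `M` periods as long
as `2 * M * ε` is small. Hence, at a scale `δ'` slightly larger than `δ`, the bad points are
covered by about `l * exp ((1 - r) * l * H(δ))` sets, and it suffices that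
`(1 - r) * H(δ) < H(δ')`. Such scales `δ < δ'` exist even when the entropy is infinite: otherwise
`H` would shrink by the factor `1 - r` between any two scales, hence vanish.
-/

open Filter Finset Topology

/-- The `ε`-overlap between two different orbit segments `x, Tx, …, T^{r−1}x` and
`y, Ty, …, T^{s−1}y`: the largest `1 ≤ k ≤ min r s` such that the last `k` points of one
segment `ε`-shadow the first `k` points of the other (or `0` if there is no such `k`). -/
noncomputable def epsOverlap {X : Type*} [MetricSpace X] (T : X → X) (ε : ℝ)
    (x : X) (r : ℕ) (y : X) (s : ℕ) : ℕ :=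
  sSup ({k | 1 ≤ k ∧ k ≤ r ∧ k ≤ s ∧
    ((∀ i < k, dist (T^[r - k + i] x) (T^[i] y) < ε) ∨
      (∀ i < k, dist (T^[s - k + i] y) (T^[i] x) < ε))} ∪ {0})

/-- The `ε`-self-overlap of the orbit segment `x, Tx, …, T^{r−1}x`: the largest `1 ≤ k < r`
such that its last `k` points `ε`-shadow its first `k` points (or `0` if there is no such `k`). -/
noncomputable def epsSelfOverlap {X : Type*} [MetricSpace X] (T : X → X) (ε : ℝ)
    (x : X) (r : ℕ) : ℕ :=
  sSup ({k | 1 ≤ k ∧ k < r ∧ ∀ i < k, dist (T^[r - k + i] x) (T^[i] x) < ε} ∪ {0})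

section Coverings

variable {X : Type*} [PseudoMetricSpace X] {T : X → X} {δ δ' : ℝ} {n n' m m' : ℕ} {S S' : Set X}

/-- `S` is covered by at most `m` sets of diameter at most `δ` for the Bowen metric
`d_n(x, y) = max {d(Tⁱx, Tⁱy) | i < n}`. -/
def BowenCoverable (T : X → X) (δ : ℝ) (n : ℕ) (S : Set X) (m : ℕ) : Prop :=
  ∃ 𝒞 : Finset (Set X), #𝒞 ≤ m ∧ (∀ x ∈ S, ∃ C ∈ 𝒞, x ∈ C) ∧
    ∀ C ∈ 𝒞, ∀ x ∈ C, ∀ y ∈ C, ∀ i < n, dist (T^[i] x) (T^[i] y) ≤ δ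

namespace BowenCoverable

theorem mono (h : BowenCoverable T δ n S m) (hS : S' ⊆ S) (hn : n' ≤ n) (hm : m ≤ m') :
    BowenCoverable T δ n' S' m' := by
  obtain ⟨𝒞, hcard, hcov, hdiam⟩ := h
  exact ⟨𝒞, hcard.trans hm, fun x hx ↦ hcov x (hS hx),
    fun C hC x hx y hy i hi ↦ hdiam C hC x hx y hy i (hi.trans_le hn)⟩

theorem union (h : BowenCoverable T δ n S m) (h' : BowenCoverable T δ n S' m') :
    BowenCoverable T δ n (S ∪ S') (m + m') := by
  classical
  obtain ⟨𝒞, hcard, hcov, hdiam⟩ := h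
  obtain ⟨𝒞', hcard', hcov', hdiam'⟩ := h'
  refine ⟨𝒞 ∪ 𝒞', (card_union_le _ _).trans (add_le_add hcard hcard'), ?_, fun C hC ↦ ?_⟩
  · rintro x (hx | hx)
    · obtain ⟨C, hC, hxC⟩ := hcov x hx
      exact ⟨C, mem_union_left _ hC, hxC⟩
    · obtain ⟨C, hC, hxC⟩ := hcov' x hx
      exact ⟨C, mem_union_right _ hC, hxC⟩
  · exact (mem_union.1 hC).elim (hdiam C) (hdiam' C)

theorem biUnion {ι : Type*} {S : ι → Set X} (s : Finset ι)
    (h : ∀ k ∈ s, BowenCoverable T δ n (S k) m) :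
    BowenCoverable T δ n (⋃ k ∈ s, S k) (#s * m) := by
  classical
  choose! 𝒞 hcard hcov hdiam using h
  refine ⟨s.biUnion 𝒞, card_biUnion_le_card_mul _ _ _ hcard, fun x hx ↦ ?_, fun C hC ↦ ?_⟩
  · obtain ⟨k, hk, hxk⟩ := Set.mem_iUnion₂.1 hx
    obtain ⟨C, hC, hxC⟩ := hcov k hk x hxk
    exact ⟨C, mem_biUnion.2 ⟨k, hk, hC⟩, hxC⟩
  · obtain ⟨k, hk, hCk⟩ := mem_biUnion.1 hC
    exact hdiam k hk C hCk

/-- The covering sets are the itineraries through the windows `[t w, t w + n w)`: one piece of the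
covering of the whole space is recorded for each window. -/
theorem of_windows {ι : Type*} [Fintype ι] {t n m : ι → ℕ} {l : ℕ}
    (h : ∀ w, BowenCoverable T δ (n w) Set.univ (m w))
    (hS : ∀ x ∈ S, ∀ y ∈ S, (∀ w, ∀ i < n w, dist (T^[i + t w] x) (T^[i + t w] y) ≤ δ) →
      ∀ i < l, dist (T^[i] x) (T^[i] y) ≤ δ') :
    BowenCoverable T δ' l S (∏ w, m w) := by
  classical
  choose 𝒞 hcard hcov hdiam using h
  refine ⟨(Fintype.piFinset 𝒞).image fun C ↦ {x ∈ S | ∀ w, T^[t w] x ∈ C w}, ?_,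
    fun x hx ↦ ?_, fun C' hC' ↦ ?_⟩
  · calc _ ≤ #(Fintype.piFinset 𝒞) := card_image_le
      _ = ∏ w, #(𝒞 w) := Fintype.card_piFinset 𝒞
      _ ≤ ∏ w, m w := prod_le_prod' fun w _ ↦ hcard w
  · choose C hC hxC using fun w ↦ hcov w (T^[t w] x) (Set.mem_univ _)
    exact ⟨_, mem_image_of_mem _ (Fintype.mem_piFinset.2 hC), hx, hxC⟩
  · obtain ⟨C, hC, rfl⟩ := mem_image.1 hC'
    rintro x ⟨hx, hxC⟩ y ⟨hy, hyC⟩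
    refine hS x hx y hy fun w i hi ↦ ?_
    simpa only [Function.iterate_add_apply] using
      hdiam w (C w) (Fintype.mem_piFinset.1 hC w) _ (hxC w) _ (hyC w) i hi

theorem add (h : BowenCoverable T δ n Set.univ m) (h' : BowenCoverable T δ n' Set.univ m') :
    BowenCoverable T δ (n + n') Set.univ (m * m') := by
  have hwindows := of_windows (δ' := δ) (S := Set.univ) (l := n + n')
    (t := fun b : Bool ↦ bif b then 0 else n) (n := fun b ↦ bif b then n else n')
    (m := fun b ↦ bif b then m else m') (Bool.forall_bool.2 ⟨h', h⟩)
    fun x _ y _ hxy i hi ↦ ?_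
  · simpa using hwindows
  · by_cases hin : i < n
    · exact hxy true i hin
    · simpa [Nat.sub_add_cancel (not_lt.1 hin)] using
        hxy false (i - n) (show i - n < n' by omega)

theorem zero (T : X → X) (δ : ℝ) (S : Set X) : BowenCoverable T δ 0 S 1 :=
  ⟨{Set.univ}, by simp⟩

end BowenCoverable

theorem exists_bowenCoverable (hX : TotallyBounded (Set.univ : Set X)) (T : X → X)
    (hδ : 0 < δ) (n : ℕ) : ∃ m, BowenCoverable T δ n Set.univ m := by
  classical
  induction n with
  | zero => exact ⟨1, .zero T δ _⟩
  | succ n ih =>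
    obtain ⟨m, hm⟩ := ih
    obtain ⟨t, ht, hcov⟩ := Metric.totallyBounded_iff.1 hX (δ / 2) (half_pos hδ)
    have hone : BowenCoverable T δ 1 Set.univ #(ht.toFinset.image (Metric.ball · (δ / 2))) := by
      refine ⟨_, le_rfl, fun x hx ↦ ?_, fun C hC x hx y hy i hi ↦ ?_⟩
      · simpa using hcov hx
      · obtain ⟨c, -, rfl⟩ := mem_image.1 hC
        obtain rfl := Nat.lt_one_iff.1 hi
        linarith [dist_triangle_right x y c, Metric.mem_ball.1 hx, Metric.mem_ball.1 hy,
          show dist (T^[0] x) (T^[0] y) = dist x y from rfl]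
    exact ⟨_, hm.add hone⟩

end Coverings

section CoveringNumbers

variable {X : Type*} [PseudoMetricSpace X] {T : X → X} {δ : ℝ} {m n : ℕ}

/-- The least number of sets of diameter at most `δ` for the Bowen metric `d_n` that cover the whole
space (`0` if no finite number suffices). -/
noncomputable def bowenNumber (T : X → X) (δ : ℝ) (n : ℕ) : ℕ :=
  sInf {m | BowenCoverable T δ n Set.univ m}

theorem BowenCoverable.bowenNumber_le (h : BowenCoverable T δ n Set.univ m) :
    bowenNumber T δ n ≤ m :=
  Nat.sInf_le h

theorem BowenCoverable.exists_notMem {S : Set X} (h : BowenCoverable T δ n S m)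
    (hm : m < bowenNumber T δ n) : ∃ x, x ∉ S := by
  by_contra! hS
  exact hm.not_ge (h.mono (fun x _ ↦ hS x) le_rfl le_rfl).bowenNumber_le

theorem bowenCoverable_bowenNumber (hX : TotallyBounded (Set.univ : Set X)) (hδ : 0 < δ) :
    BowenCoverable T δ n Set.univ (bowenNumber T δ n) :=
  Nat.sInf_mem (exists_bowenCoverable hX T hδ n)

theorem bowenNumber_mono (hX : TotallyBounded (Set.univ : Set X)) (hδ : 0 < δ) :
    Monotone (bowenNumber T δ) := fun _ _ h ↦
  ((bowenCoverable_bowenNumber hX hδ).mono subset_rfl h le_rfl).bowenNumber_le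

theorem bowenNumber_add_le (hX : TotallyBounded (Set.univ : Set X)) (hδ : 0 < δ) (m n : ℕ) :
    bowenNumber T δ (m + n) ≤ bowenNumber T δ m * bowenNumber T δ n :=
  ((bowenCoverable_bowenNumber hX hδ).add (bowenCoverable_bowenNumber hX hδ)).bowenNumber_le

theorem bowenNumber_le_pow (hX : TotallyBounded (Set.univ : Set X)) (hδ : 0 < δ) (n : ℕ) :
    bowenNumber T δ n ≤ bowenNumber T δ 1 ^ n := by
  induction n with
  | zero => simpa using (BowenCoverable.zero T δ Set.univ).bowenNumber_le
  | succ n ih =>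
    rw [pow_succ]
    exact (bowenNumber_add_le hX hδ n 1).trans (Nat.mul_le_mul_right _ ih)

theorem bowenNumber_pos [Nonempty X] (hX : TotallyBounded (Set.univ : Set X)) (hδ : 0 < δ) :
    0 < bowenNumber T δ n := by
  obtain ⟨𝒞, hcard, hcov, -⟩ := bowenCoverable_bowenNumber (T := T) (n := n) hX hδ
  obtain ⟨C, hC, -⟩ := hcov (Classical.arbitrary X) (Set.mem_univ _)
  exact (card_pos.2 ⟨C, hC⟩).trans_le hcard

theorem coverMincard_le_bowenNumber [Nonempty X] (hX : TotallyBounded (Set.univ : Set X))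
    (hδ : 0 < δ) {U : SetRel X X} (hU : ∀ x y : X, dist x y ≤ δ → (x, y) ∈ U) :
    Dynamics.coverMincard T Set.univ U n ≤ bowenNumber T δ n := by
  classical
  obtain ⟨𝒞, hcard, hcov, hdiam⟩ := bowenCoverable_bowenNumber (T := T) (n := n) hX hδ
  let centres : Finset X := 𝒞.image fun C ↦ Classical.epsilon (· ∈ C)
  have hcentres : Dynamics.IsDynCoverOf T Set.univ U n (centres : Set X) := by
    intro x hx
    obtain ⟨C, hC, hxC⟩ := hcov x hx
    refine ⟨_, mem_image_of_mem _ hC, Dynamics.mem_dynEntourage.2 fun i hi ↦ ?_⟩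
    exact hU _ _ (hdiam C hC _ hxC _ (Classical.epsilon_spec (p := (· ∈ C)) ⟨x, hxC⟩) i hi)
  exact hcentres.coverMincard_le_card.trans (mod_cast card_image_le.trans hcard)

end CoveringNumbers

theorem exists_lt_and_mul_lt {α : Type*} [Preorder α] [DenselyOrdered α] {a b : α} {c : ℝ}
    {f : α → ℝ} (hab : a < b) (hc : c < 1) (hf : ∀ x ∈ Set.Ioo a b, 0 < f x) :
    ∃ x ∈ Set.Ioo a b, ∃ y ∈ Set.Ioo a b, x < y ∧ c * f x < f y := by
  by_contra! h
  obtain ⟨x₀, hax₀, hx₀b⟩ := exists_between hab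
  obtain ⟨y₀, hx₀y₀, hy₀b⟩ := exists_between hx₀b
  have hsub {x} (hx : x ∈ Set.Ioo x₀ b) : x ∈ Set.Ioo a b := ⟨hax₀.trans hx.1, hx.2⟩
  have hbdd : BddAbove (f '' Set.Ioo x₀ b) := ⟨c * f x₀, Set.forall_mem_image.2 fun x hx ↦
    h x₀ ⟨hax₀, hx₀b⟩ x (hsub hx) hx.1⟩
  set s := sSup (f '' Set.Ioo x₀ b)
  have hle {x} (hx : x ∈ Set.Ioo x₀ b) : f x ≤ s := le_csSup hbdd ⟨x, hx, rfl⟩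
  have hy₀ : y₀ ∈ Set.Ioo x₀ b := ⟨hx₀y₀, hy₀b⟩
  have hs : 0 < s := (hf y₀ (hsub hy₀)).trans_le (hle hy₀)
  have hc₀ : 0 ≤ c := by
    by_contra! hneg
    have := h x₀ ⟨hax₀, hx₀b⟩ y₀ (hsub hy₀) hx₀y₀
    nlinarith [hf x₀ ⟨hax₀, hx₀b⟩, hf y₀ (hsub hy₀)]
  have hcontract : s ≤ c * s := by
    refine csSup_le ⟨_, y₀, hy₀, rfl⟩ (Set.forall_mem_image.2 fun y hy ↦ ?_)
    obtain ⟨x, hx₀x, hxy⟩ := exists_between hy.1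
    have hx : x ∈ Set.Ioo x₀ b := ⟨hx₀x, hxy.trans hy.2⟩
    exact (h x (hsub hx) y (hsub hy) hxy).trans (mul_le_mul_of_nonneg_left (hle hx) hc₀)
  nlinarith

section Entropy

variable {X : Type*} [PseudoMetricSpace X] {T : X → X} {δ : ℝ}

/-- The exponential growth rate in `n` of `bowenNumber T δ n`, written as an infimum because the
logarithms form a subadditive sequence. -/
noncomputable def bowenEntropy (T : X → X) (δ : ℝ) : ℝ :=
  sInf ((fun n : ℕ ↦ Real.log (bowenNumber T δ n) / n) '' Set.Ici 1)

theorem bowenEntropy_nonneg (T : X → X) (δ : ℝ) : 0 ≤ bowenEntropy T δ := by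
  refine Real.sInf_nonneg (Set.forall_mem_image.2 fun n _ ↦ ?_)
  exact div_nonneg (Real.log_natCast_nonneg _) (Nat.cast_nonneg _)

theorem bddBelow_log_bowenNumber_div (T : X → X) (δ : ℝ) :
    BddBelow (Set.range fun n : ℕ ↦ Real.log (bowenNumber T δ n) / n) :=
  ⟨0, Set.forall_mem_range.2 fun _ ↦ div_nonneg (Real.log_natCast_nonneg _) (Nat.cast_nonneg _)⟩

variable [Nonempty X]

theorem subadditive_log_bowenNumber (hX : TotallyBounded (Set.univ : Set X)) (hδ : 0 < δ) :
    Subadditive fun n ↦ Real.log (bowenNumber T δ n) := by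
  have hpos n : (0 : ℝ) < bowenNumber T δ n := mod_cast bowenNumber_pos hX hδ
  intro m n
  rw [← Real.log_mul (hpos m).ne' (hpos n).ne']
  exact Real.log_le_log (hpos _) (mod_cast bowenNumber_add_le hX hδ m n)

theorem tendsto_log_bowenNumber_div (hX : TotallyBounded (Set.univ : Set X)) (hδ : 0 < δ) :
    Tendsto (fun n : ℕ ↦ Real.log (bowenNumber T δ n) / n) atTop (𝓝 (bowenEntropy T δ)) := by
  simpa only [Subadditive.lim, bowenEntropy] using
    (subadditive_log_bowenNumber hX hδ).tendsto_lim (bddBelow_log_bowenNumber_div T δ)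

theorem exp_bowenEntropy_mul_le_bowenNumber (hX : TotallyBounded (Set.univ : Set X)) (hδ : 0 < δ)
    (n : ℕ) : Real.exp (bowenEntropy T δ * n) ≤ bowenNumber T δ n := by
  rw [← Real.le_log_iff_exp_le (mod_cast bowenNumber_pos hX hδ)]
  obtain rfl | hn := n.eq_zero_or_pos
  · simpa using Real.log_natCast_nonneg _
  · rw [← le_div_iff₀ (by positivity)]
    exact csInf_le ((bddBelow_log_bowenNumber_div T δ).mono (Set.image_subset_range _ _))
      ⟨n, hn, rfl⟩

theorem coverEntropyEntourage_le_bowenEntropy (hX : TotallyBounded (Set.univ : Set X))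
    (hδ : 0 < δ) {U : SetRel X X} (hU : ∀ x y : X, dist x y ≤ δ → (x, y) ∈ U) :
    Dynamics.coverEntropyEntourage T Set.univ U ≤ bowenEntropy T δ := by
  have hgrowth : ExpGrowth.expGrowthSup (fun n ↦ ENNReal.ofReal (bowenNumber T δ n)) =
      (bowenEntropy T δ : EReal) := by
    refine Tendsto.limsup_eq <| ((continuous_coe_real_ereal.tendsto _).comp
      (tendsto_log_bowenNumber_div (T := T) hX hδ)).congr fun n ↦ ?_
    have hpos : (0 : ℝ) < bowenNumber T δ n := mod_cast bowenNumber_pos hX hδ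
    rw [Function.comp_apply, ENNReal.log_ofReal_of_pos hpos, EReal.coe_div]
    rfl
  rw [← hgrowth]
  refine ExpGrowth.expGrowthSup_monotone fun n ↦ ?_
  simpa using ENat.toENNReal_mono (coverMincard_le_bowenNumber (T := T) (n := n) hX hδ hU)

theorem exists_mul_bowenEntropy_lt (hX : TotallyBounded (Set.univ : Set X))
    (hent : 0 < Dynamics.coverEntropy T Set.univ) {c : ℝ} (hc : c < 1) :
    ∃ δ δ' : ℝ, 0 < δ ∧ δ < δ' ∧ c * bowenEntropy T δ < bowenEntropy T δ' := by
  simp only [Dynamics.coverEntropy, lt_iSup_iff] at hent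
  obtain ⟨U, hU, hentU⟩ := hent
  obtain ⟨δ₀, hδ₀, hdistU⟩ := Metric.mem_uniformity_dist.1 hU
  have hpos : ∀ δ ∈ Set.Ioo 0 δ₀, 0 < bowenEntropy T δ := fun δ hδ ↦ EReal.coe_pos.1 <|
    hentU.trans_le <| coverEntropyEntourage_le_bowenEntropy hX hδ.1 fun _ _ hxy ↦
      hdistU (hxy.trans_lt hδ.2)
  obtain ⟨δ, hδ, δ', -, hδδ', hlt⟩ := exists_lt_and_mul_lt hδ₀ hc hpos
  exact ⟨δ, δ', hδ.1, hδδ', hlt⟩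

end Entropy

section Shadowing

variable {X : Type*} [PseudoMetricSpace X] {T : X → X} {δ δ' ε : ℝ} {l m p : ℕ} {x y : X}

/-- The orbit segment `Tᵖx, …, Tˡ⁻¹x` `ε`-shadows `y, …, Tˡ⁻ᵖ⁻¹y`: an overlap of length `l - p`
between the orbit segments of length `l` of `x` and `y`. -/
def ShadowsAfter (T : X → X) (ε : ℝ) (l p : ℕ) (x y : X) : Prop :=
  ∀ i, p + i < l → dist (T^[p + i] x) (T^[i] y) < ε

theorem ShadowsAfter.dist_iterate_mul_add_le (h : ShadowsAfter T ε l p x x) (j : ℕ) {i : ℕ}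
    (hi : p * j + i < l) : dist (T^[p * j + i] x) (T^[i] x) ≤ j * ε := by
  induction j with
  | zero => simp
  | succ j ih =>
    have hstep : p * (j + 1) + i = p + (p * j + i) := by ring
    rw [hstep] at hi ⊢
    calc dist (T^[p + (p * j + i)] x) (T^[i] x)
        ≤ dist (T^[p + (p * j + i)] x) (T^[p * j + i] x) + dist (T^[p * j + i] x) (T^[i] x) :=
          dist_triangle _ _ _
      _ ≤ ε + j * ε := add_le_add (h _ hi).le (ih (by omega))
      _ = (j + 1 : ℕ) * ε := by push_cast; ring

theorem bowenCoverable_shadowsAfter_right (hδ : δ ≤ δ') (hε : 2 * ε ≤ δ') (hp : p ≤ l)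
    (h : BowenCoverable T δ p Set.univ m) (x : X) :
    BowenCoverable T δ' l {y | ShadowsAfter T ε l p x y} m := by
  have hwindow := BowenCoverable.of_windows (ι := Unit) (S := {y | ShadowsAfter T ε l p x y})
    (δ' := δ') (l := l) (t := fun _ ↦ l - p) (fun _ ↦ h) fun y hy z hz hyz i hi ↦ ?_
  · simpa using hwindow
  · by_cases hip : p + i < l
    · linarith [hy i hip, hz i hip, dist_triangle_left (T^[i] y) (T^[i] z) (T^[p + i] x)]
    · have hlast := hyz () (i - (l - p)) (by omega)
      rw [Nat.sub_add_cancel (by omega)] at hlast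
      exact hlast.trans hδ

theorem bowenCoverable_shadowsAfter_left (hδ : δ ≤ δ') (hε : 2 * ε ≤ δ')
    (h : BowenCoverable T δ p Set.univ m) (x : X) :
    BowenCoverable T δ' l {y | ShadowsAfter T ε l p y x} m := by
  have hwindow := BowenCoverable.of_windows (ι := Unit) (S := {y | ShadowsAfter T ε l p y x})
    (δ' := δ') (l := l) (t := fun _ ↦ 0) (fun _ ↦ h) fun y hy z hz hyz i hi ↦ ?_
  · simpa using hwindow
  · by_cases hip : p ≤ i
    · obtain ⟨j, rfl⟩ := Nat.exists_eq_add_of_le hip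
      linarith [hy j hi, hz j hi, dist_triangle_right (T^[p + j] y) (T^[p + j] z) (T^[j] x)]
    · exact (hyz () i (not_le.1 hip)).trans hδ

theorem bowenCoverable_shadowsAfter_self (hε : 0 ≤ ε) {M a : ℕ} (hp : 0 < p) (hM : 0 < M)
    (hδ' : δ + 2 * M * ε ≤ δ') (hl : l ≤ a * (M * p)) (h : BowenCoverable T δ p Set.univ m) :
    BowenCoverable T δ' l {x | ShadowsAfter T ε l p x x} (m ^ a) := by
  have hwindows := BowenCoverable.of_windows (ι := Fin a) (S := {x | ShadowsAfter T ε l p x x})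
    (δ' := δ') (l := l) (t := fun w ↦ M * p * w) (fun _ ↦ h) fun x hx y hy hxy i hi ↦ ?_
  · simpa using hwindows
  · -- `i = (M * p) * w + p * j + k` lies `j < M` periods after a point of the window `w`.
    have hMp : 0 < M * p := Nat.mul_pos hM hp
    set w := i / (M * p)
    set j := i % (M * p) / p
    set k := i % (M * p) % p
    have hw : w < a := (Nat.div_lt_iff_lt_mul hMp).2 (hi.trans_le hl)
    have hj : j < M := (Nat.div_lt_iff_lt_mul hp).2 (Nat.mod_lt _ hMp)
    have hi_eq : i = p * j + (k + M * p * w) := by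
      rw [← add_assoc, Nat.div_add_mod, Nat.mod_add_div]
    have hdrift {z} (hz : ShadowsAfter T ε l p z z) :
        dist (T^[i] z) (T^[k + M * p * w] z) ≤ M * ε := by
      have hdist := hz.dist_iterate_mul_add_le j (hi_eq ▸ hi)
      rw [← hi_eq] at hdist
      exact hdist.trans (by gcongr)
    have hwindow : dist (T^[k + M * p * w] x) (T^[k + M * p * w] y) ≤ δ :=
      hxy ⟨w, hw⟩ k (Nat.mod_lt _ hp)
    linarith [hdrift hx, hdrift hy, dist_comm (T^[i] y) (T^[k + M * p * w] y),
      dist_triangle4 (T^[i] x) (T^[k + M * p * w] x) (T^[k + M * p * w] y) (T^[i] y)]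

theorem bowenCoverable_shadowsAfter_self_of_le [Nonempty X]
    (hX : TotallyBounded (Set.univ : Set X)) (hδ : 0 < δ) (hε : 0 ≤ ε) {M : ℕ} (hp : 0 < p)
    (hpm : p ≤ m) (hM : 0 < M) (hδ' : δ + 2 * M * ε ≤ δ') :
    BowenCoverable T δ' l {x | ShadowsAfter T ε l p x x}
      (max (bowenNumber T δ m) (bowenNumber T δ 1 ^ (2 * l / M))) := by
  have hself {a : ℕ} (ha : l ≤ a * (M * p)) :=
    bowenCoverable_shadowsAfter_self hε hp hM hδ' ha (bowenCoverable_bowenNumber (T := T) hX hδ)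
  have hMp : 0 < M * p := Nat.mul_pos hM hp
  by_cases hl : l ≤ M * p
  · refine (hself (a := 1) (by omega)).mono subset_rfl le_rfl (le_max_of_le_left ?_)
    simpa using bowenNumber_mono hX hδ hpm
  · have hceil := Nat.lt_div_mul_add (a := l) hMp
    refine (hself (a := l / (M * p) + 1) (by linarith)).mono subset_rfl le_rfl
      (le_max_of_le_right ?_)
    have hexponent : p * (l / (M * p) + 1) ≤ 2 * l / M := by
      rw [Nat.le_div_iff_mul_le hM]
      linarith [Nat.div_mul_le_self l (M * p)]
    calc bowenNumber T δ p ^ (l / (M * p) + 1)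
        ≤ (bowenNumber T δ 1 ^ p) ^ (l / (M * p) + 1) :=
          Nat.pow_le_pow_left (bowenNumber_le_pow hX hδ p) _
      _ = bowenNumber T δ 1 ^ (p * (l / (M * p) + 1)) := (pow_mul _ _ _).symm
      _ ≤ bowenNumber T δ 1 ^ (2 * l / M) :=
          Nat.pow_le_pow_right (bowenNumber_pos hX hδ) hexponent

theorem exists_forall_not_shadowsAfter [Nonempty X] (hX : TotallyBounded (Set.univ : Set X))
    (hδ : 0 < δ) (hε : 0 ≤ ε) {M : ℕ} (hM : 0 < M) (hδ' : δ + 2 * M * ε ≤ δ') (hml : m ≤ l)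
    (hcard : 3 * ((m + 1) * max (bowenNumber T δ m) (bowenNumber T δ 1 ^ (2 * l / M))) <
      bowenNumber T δ' l) :
    ∃ x y : X, (∀ p, 0 < p → p ≤ m → ¬ShadowsAfter T ε l p x x) ∧
      (∀ p, 0 < p → p ≤ m → ¬ShadowsAfter T ε l p y y) ∧
      ∀ p ≤ m, ¬ShadowsAfter T ε l p x y ∧ ¬ShadowsAfter T ε l p y x := by
  set q := max (bowenNumber T δ m) (bowenNumber T δ 1 ^ (2 * l / M))
  have hMε : ε ≤ M * ε := le_mul_of_one_le_left hε (mod_cast hM)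
  have hone {p} (hp : p ∈ Finset.range (m + 1)) : BowenCoverable T δ p Set.univ q :=
    (bowenCoverable_bowenNumber hX hδ).mono subset_rfl le_rfl
      (le_max_of_le_left (bowenNumber_mono hX hδ (Nat.le_of_lt_succ (mem_range.1 hp))))
  have hself : BowenCoverable T δ' l (⋃ p ∈ Finset.Ioc 0 m, {x | ShadowsAfter T ε l p x x})
      (#(Finset.Ioc 0 m) * q) := .biUnion _ fun p hp ↦
    have hp := Finset.mem_Ioc.1 hp
    bowenCoverable_shadowsAfter_self_of_le hX hδ hε hp.1 hp.2 hM hδ'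
  have hright (x : X) := BowenCoverable.biUnion (range (m + 1)) fun p hp ↦
    bowenCoverable_shadowsAfter_right (δ' := δ') (ε := ε) (by linarith) (by linarith)
      ((Nat.le_of_lt_succ (mem_range.1 hp)).trans hml) (hone hp) x
  have hleft (x : X) := BowenCoverable.biUnion (range (m + 1)) fun p hp ↦
    bowenCoverable_shadowsAfter_left (l := l) (δ' := δ') (ε := ε) (by linarith) (by linarith)
      (hone hp) x
  simp only [Nat.card_Ioc, tsub_zero, card_range] at hself hright hleft
  obtain ⟨x, hx⟩ := hself.exists_notMem (by linarith)
  obtain ⟨y, hy⟩ := (hself.union ((hright x).union (hleft x))).exists_notMem (by linarith)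
  simp only [Set.mem_union, Set.mem_iUnion, Set.mem_ofPred_eq, mem_Ioc, mem_range,
    Nat.lt_succ_iff, exists_prop, not_or, not_exists, not_and, and_imp] at hx hy
  exact ⟨x, y, hx, hy.1, fun p hp ↦ ⟨hy.2.1 p hp, hy.2.2 p hp⟩⟩

end Shadowing

section Asymptotics

theorem eventually_mul_exp_lt_exp {a b : ℝ} (hab : a < b) :
    ∀ᶠ l : ℕ in atTop, 3 * ((l : ℝ) + 1) * Real.exp (a * l) < Real.exp (b * l) := by
  have hlittleO := (isLittleO_pow_exp_pos_mul_atTop 1 (sub_pos.2 hab)).comp_tendsto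
    tendsto_natCast_atTop_atTop
  filter_upwards [hlittleO.bound (show (0 : ℝ) < 1 / 7 by norm_num), eventually_ge_atTop 1]
    with l hl hl₁
  have hl' : (l : ℝ) ≤ 1 / 7 * Real.exp ((b - a) * l) := by simpa using hl
  have hl₁' : (1 : ℝ) ≤ l := mod_cast hl₁
  calc 3 * ((l : ℝ) + 1) * Real.exp (a * l)
      < Real.exp ((b - a) * l) * Real.exp (a * l) := by gcongr; linarith
    _ = Real.exp (b * l) := by rw [← Real.exp_add]; ring_nf

variable {X : Type*} [PseudoMetricSpace X] [Nonempty X] {T : X → X} {δ δ' s γ : ℝ}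

theorem tendsto_log_bowenNumber_floor_mul_div (hX : TotallyBounded (Set.univ : Set X))
    (hδ : 0 < δ) (hs : 0 < s) :
    Tendsto (fun l : ℕ ↦ Real.log (bowenNumber T δ ⌊s * l⌋₊) / l) atTop
      (𝓝 (bowenEntropy T δ * s)) := by
  have hcast : Tendsto (Nat.cast : ℕ → ℝ) atTop atTop := tendsto_natCast_atTop_atTop
  have hfloor : Tendsto (fun l : ℕ ↦ ⌊s * l⌋₊) atTop atTop :=
    tendsto_nat_floor_atTop.comp (hcast.const_mul_atTop hs)
  refine (((tendsto_log_bowenNumber_div hX hδ).comp hfloor).mul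
    ((tendsto_nat_floor_mul_div_atTop hs.le).comp hcast)).congr' ?_
  filter_upwards [hfloor.eventually_ne_atTop 0] with l hl
  exact div_mul_div_cancel₀ (Nat.cast_ne_zero.2 hl)

theorem bowenNumber_one_pow_le_exp (hX : TotallyBounded (Set.univ : Set X)) (hδ : 0 < δ) {M : ℕ}
    (hM : 0 < M) (hMγ : 2 * Real.log (bowenNumber T δ 1) ≤ γ * M) (l : ℕ) :
    (bowenNumber T δ 1 : ℝ) ^ (2 * l / M) ≤ Real.exp (γ * l) := by
  have hpos : (0 : ℝ) < bowenNumber T δ 1 := mod_cast bowenNumber_pos hX hδ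
  rw [← Real.log_le_iff_le_exp (by positivity), Real.log_pow]
  have : 0 ≤ Real.log (bowenNumber T δ 1) := Real.log_natCast_nonneg _
  calc ((2 * l / M : ℕ) : ℝ) * Real.log (bowenNumber T δ 1)
      ≤ (2 * l : ℕ) / M * Real.log (bowenNumber T δ 1) := by gcongr; exact Nat.cast_div_le
    _ = l / M * (2 * Real.log (bowenNumber T δ 1)) := by push_cast; ring
    _ ≤ l / M * (γ * M) := by gcongr
    _ = γ * l := by field_simp

theorem eventually_card_lt_bowenNumber (hX : TotallyBounded (Set.univ : Set X)) (hδ : 0 < δ)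
    (hδ' : 0 < δ') (hs₀ : 0 < s) (hs₁ : s ≤ 1) (hγ : bowenEntropy T δ * s < γ)
    (hγ' : γ < bowenEntropy T δ') {M : ℕ} (hM : 0 < M)
    (hMγ : 2 * Real.log (bowenNumber T δ 1) ≤ γ * M) :
    ∀ᶠ l : ℕ in atTop, 3 * ((⌊s * l⌋₊ + 1) *
      max (bowenNumber T δ ⌊s * l⌋₊) (bowenNumber T δ 1 ^ (2 * l / M))) < bowenNumber T δ' l := by
  filter_upwards [(tendsto_log_bowenNumber_floor_mul_div (T := T) hX hδ hs₀).eventually_lt_const hγ,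
    eventually_mul_exp_lt_exp hγ', eventually_gt_atTop 0] with l hfloor hexp hl
  have hnumber : (bowenNumber T δ ⌊s * l⌋₊ : ℝ) ≤ Real.exp (γ * l) := by
    rw [← Real.log_le_iff_le_exp (mod_cast bowenNumber_pos hX hδ)]
    exact ((div_lt_iff₀ (mod_cast hl)).1 hfloor).le
  have hfloor_le : (⌊s * l⌋₊ : ℝ) ≤ l :=
    (Nat.floor_le (by positivity)).trans (mul_le_of_le_one_left (Nat.cast_nonneg _) hs₁)
  have hreal : (3 : ℝ) * ((⌊s * l⌋₊ + 1) *
      max (bowenNumber T δ ⌊s * l⌋₊ : ℝ) ((bowenNumber T δ 1 : ℝ) ^ (2 * l / M))) <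
      bowenNumber T δ' l :=
    calc _ ≤ (3 : ℝ) * ((l + 1) * Real.exp (γ * l)) := by
          gcongr
          exact max_le hnumber (bowenNumber_one_pow_le_exp hX hδ hM hMγ l)
      _ = 3 * ((l : ℝ) + 1) * Real.exp (γ * l) := by ring
      _ < Real.exp (bowenEntropy T δ' * l) := hexp
      _ ≤ bowenNumber T δ' l := exp_bowenEntropy_mul_le_bowenNumber hX hδ' l
  exact_mod_cast hreal

end Asymptotics

section Overlap

variable {X : Type*} [MetricSpace X] {T : X → X} {ε : ℝ} {l k : ℕ} {x y : X}

theorem epsOverlap_lt (hk : 0 < k)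
    (h : ∀ p, p + k ≤ l → ¬ShadowsAfter T ε l p x y ∧ ¬ShadowsAfter T ε l p y x) :
    epsOverlap T ε x l y l < k := by
  refine (csSup_le' ?_).trans_lt (Nat.sub_one_lt hk.ne')
  rintro j (⟨-, hjl, -, hj⟩ | rfl)
  · by_contra! hkj
    have hnot := h (l - j) (by omega)
    exact hj.elim (fun hxy ↦ hnot.1 fun i hi ↦ hxy i (by omega))
      fun hyx ↦ hnot.2 fun i hi ↦ hyx i (by omega)
  · exact Nat.zero_le _

theorem epsSelfOverlap_lt (hk : 0 < k)
    (h : ∀ p, 0 < p → p + k ≤ l → ¬ShadowsAfter T ε l p x x) : epsSelfOverlap T ε x l < k := by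
  refine (csSup_le' ?_).trans_lt (Nat.sub_one_lt hk.ne')
  rintro j (⟨-, hjl, hj⟩ | rfl)
  · by_contra! hkj
    exact h (l - j) (by omega) (by omega) fun i hi ↦ hj i (by omega)
  · exact Nat.zero_le _

theorem exists_iterate_ne_of_not_shadowsAfter_zero (hε : 0 < ε)
    (h : ¬ShadowsAfter T ε l 0 x y) : ∃ i < l, T^[i] x ≠ T^[i] y := by
  contrapose! h
  intro i hi
  rw [zero_add] at hi ⊢
  rwa [h i hi, dist_self]

theorem exists_overlaps_lt_of_card_lt [Nonempty X] (hX : TotallyBounded (Set.univ : Set X))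
    {δ δ' r : ℝ} {M : ℕ} (hδ : 0 < δ) (hε : 0 < ε) (hM : 0 < M) (hδ' : δ + 2 * M * ε ≤ δ')
    (hr : 0 < r) (hl : 0 < l)
    (hcard : 3 * ((⌊(1 - r) * l⌋₊ + 1) * max (bowenNumber T δ ⌊(1 - r) * l⌋₊)
      (bowenNumber T δ 1 ^ (2 * l / M))) < bowenNumber T δ' l) :
    ∃ x y : X, (∃ i < l, T^[i] x ≠ T^[i] y) ∧ (epsOverlap T ε x l y l : ℝ) < r * l ∧
      (epsSelfOverlap T ε x l : ℝ) < r * l ∧ (epsSelfOverlap T ε y l : ℝ) < r * l := by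
  have hfloor_le : ⌊(1 - r) * l⌋₊ ≤ l := Nat.floor_le_of_le (by nlinarith)
  obtain ⟨x, y, hx, hy, hxy⟩ :=
    exists_forall_not_shadowsAfter hX hδ hε.le hM hδ' hfloor_le hcard
  have hshift {p : ℕ} (hp : p + ⌈r * l⌉₊ ≤ l) : p ≤ ⌊(1 - r) * l⌋₊ := by
    have hp' : (p : ℝ) + ⌈r * l⌉₊ ≤ l := mod_cast hp
    exact Nat.le_floor (by linarith [Nat.le_ceil (r * l)])
  have hpos : 0 < ⌈r * l⌉₊ := Nat.ceil_pos.2 (by positivity)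
  exact ⟨x, y, exists_iterate_ne_of_not_shadowsAfter_zero hε (hxy 0 (Nat.zero_le _)).1,
    Nat.lt_ceil.1 (epsOverlap_lt hpos fun p hp ↦ hxy p (hshift hp)),
    Nat.lt_ceil.1 (epsSelfOverlap_lt hpos fun p hp₀ hp ↦ hx p hp₀ (hshift hp)),
    Nat.lt_ceil.1 (epsSelfOverlap_lt hpos fun p hp₀ hp ↦ hy p hp₀ (hshift hp))⟩

end Overlap

theorem statement_12_general
    {X : Type*} [MetricSpace X] (hX : TotallyBounded (Set.univ : Set X))
    (T : X → X)
    (hent : 0 < Dynamics.coverEntropy T Set.univ)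
    (r : ℝ) (hr0 : 0 < r) (hr1 : r < 1) :
    ∃ ε₀ > (0 : ℝ), ∀ ε, 0 < ε → ε ≤ ε₀ → ∃ L : ℕ, ∀ l ≥ L, ∃ x y : X,
      (∃ i < l, T^[i] x ≠ T^[i] y) ∧
      (epsOverlap T ε x l y l : ℝ) < r * l ∧
      (epsSelfOverlap T ε x l : ℝ) < r * l ∧
      (epsSelfOverlap T ε y l : ℝ) < r * l := by
  have : Nonempty X := by
    by_contra! hempty
    simp [Set.univ_eq_empty_iff.2 hempty] at hent
  have hr : 0 < 1 - r := sub_pos.2 hr1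
  obtain ⟨δ, δ', hδ, hδδ', hlt⟩ := exists_mul_bowenEntropy_lt hX hent (sub_lt_self 1 hr0)
  rw [mul_comm] at hlt
  obtain ⟨γ, hγ, hγ'⟩ := exists_between hlt
  have hγ₀ : 0 < γ := (mul_nonneg (bowenEntropy_nonneg T δ) hr.le).trans_lt hγ
  obtain ⟨M, hMγ, hM⟩ : ∃ M : ℕ, 2 * Real.log (bowenNumber T δ 1) ≤ γ * M ∧ 0 < M :=
    (((tendsto_natCast_atTop_atTop.const_mul_atTop hγ₀).eventually_ge_atTop _).and
      (eventually_gt_atTop 0)).exists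
  refine ⟨(δ' - δ) / (2 * M), div_pos (sub_pos.2 hδδ') (by positivity), fun ε hε hεle ↦ ?_⟩
  have hδε : δ + 2 * M * ε ≤ δ' := by linarith [(le_div_iff₀' (by positivity)).1 hεle]
  obtain ⟨L, hL⟩ := eventually_atTop.1 <| (eventually_card_lt_bowenNumber hX hδ (hδ.trans hδδ') hr
    (sub_le_self 1 hr0.le) hγ hγ' hM hMγ).and (eventually_gt_atTop 0)
  exact ⟨L, fun l hl ↦
    exists_overlaps_lt_of_card_lt hX hδ hε hM hδε hr0 (hL l hl).2 (hL l hl).1⟩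

theorem statement_12
    {X : Type*} [MetricSpace X] [CompactSpace X]
    (T : X → X) (hT : Continuous T)
    (hent : 0 < Dynamics.coverEntropy T Set.univ)
    (r : ℝ) (hr0 : 0 < r) (hr1 : r < 1) :
    ∃ ε₀ > (0 : ℝ), ∀ ε, 0 < ε → ε ≤ ε₀ → ∃ L : ℕ, ∀ l ≥ L, ∃ x y : X,
      (∃ i < l, T^[i] x ≠ T^[i] y) ∧
      (epsOverlap T ε x l y l : ℝ) < r * l ∧
      (epsSelfOverlap T ε x l : ℝ) < r * l ∧
      (epsSelfOverlap T ε y l : ℝ) < r * l :=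
  statement_12_general isCompact_univ.totallyBounded T hent r hr0 hr1
end

section
/- Let Λ be a finite set and x = (x_n)_{n≥0} ∈ Λ^{ℕ∪{0}} a sequence such that for every n ≥ 1 there exists k > n−1 with x_k…x_{k+n−1} = x₀…x_{n−1}. Define R_n(x) = min{k > 0 : x_k…x_{k+n−1} = x₀…x_{n−1}} and R'_n(x) = min{k > n−1 : x_k…x_{k+n−1} = x₀…x_{n−1}}. If liminf_{n→∞} (log R'_n(x))/n > 0, then R_n(x) = R'_n(x) for all but finitely many n, and consequently lim_{n→∞} (log R_n(x))/n exists if and only if lim_{n→∞} (log R'_n(x))/n exists, in which case the limits are equal. -/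
open Filter Finset Topology

/-- `R_n(x)`: the least `k > 0` such that the word of length `n` starting at coordinate `k`
of `x` equals the initial word of length `n` of `x`. -/
noncomputable def firstReturn {Λ : Type*} (x : ℕ → Λ) (n : ℕ) : ℕ :=
  sInf {k | 0 < k ∧ ∀ i < n, x (k + i) = x i}

/-- `R'_n(x)`: the least `k > n − 1` such that the word of length `n` starting at coordinate
`k` of `x` equals the initial word of length `n` of `x` (non-overlapping return). -/
noncomputable def firstReturn' {Λ : Type*} (x : ℕ → Λ) (n : ℕ) : ℕ :=
  sInf {k | n ≤ k ∧ ∀ i < n, x (k + i) = x i}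

/-!
A return time `p` of the initial word of length `n` with `0 < p < n` makes that word periodic.
If `p` is large, the initial word of length `2 * p` is a square; if `p` is small compared with `n`,
a long initial word made of repeated blocks of length `p` is a square. Overlapping returns for
arbitrarily large `n` therefore produce arbitrarily long square prefixes, and a square prefix of
length `2 * m` means `R'_m(x) = m`, which is incompatible with exponential growth of `R'_m(x)`.
-/

section ReturnTimes

variable {Λ : Type*} {x : ℕ → Λ} {m n k p : ℕ}

/-- `k` is a return time of the initial word of length `n` of `x`: the word of length `n` starting
at coordinate `k` equals it. The trivial return `k = 0` and overlaps (`k < n`) are allowed. -/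
def IsReturnTime (x : ℕ → Λ) (n k : ℕ) : Prop :=
  ∀ i < n, x (k + i) = x i

namespace IsReturnTime

theorem mono (h : IsReturnTime x n k) (hmn : m ≤ n) : IsReturnTime x m k :=
  fun i hi => h i (hi.trans_le hmn)

theorem add (hk : IsReturnTime x n k) (hp : IsReturnTime x (k + n) p) :
    IsReturnTime x n (p + k) := fun i hi =>
  calc x (p + k + i) = x (p + (k + i)) := by rw [add_assoc]
    _ = x (k + i) := hp (k + i) (by lia)
    _ = x i := hk i hi

theorem mul (q : ℕ) (hp : IsReturnTime x (q * p + n) p) : IsReturnTime x n (q * p) := by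
  induction q with
  | zero => intro i _; rw [zero_mul, zero_add]
  | succ q ih =>
    have hp' : IsReturnTime x (q * p + n) p := hp.mono (by lia)
    rw [Nat.succ_mul, add_comm]
    exact (ih hp').add hp'

theorem exists_ge_isReturnTime_self {N : ℕ} (h : IsReturnTime x n p) (hp : 0 < p) (hpn : p ≤ n)
    (hN : 2 * N ^ 2 ≤ n) : ∃ m ≥ N, IsReturnTime x m m := by
  obtain hNp | hpN := le_total N p
  · exact ⟨p, hNp, h.mono hpn⟩
  · have hlen : N * p + N * p ≤ n := by nlinarith
    exact ⟨N * p, Nat.le_mul_of_pos_right N hp, (h.mono hlen).mul N⟩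

theorem firstReturn'_le (h : IsReturnTime x n k) (hnk : n ≤ k) : firstReturn' x n ≤ k :=
  Nat.sInf_le ⟨hnk, h⟩

end IsReturnTime

theorem firstReturn_eq_firstReturn' (hn : 0 < n)
    (h : ∀ k, 0 < k → k < n → ¬ IsReturnTime x n k) : firstReturn x n = firstReturn' x n := by
  refine congrArg sInf (Set.ext fun k => and_congr_left fun hk => ?_)
  exact ⟨fun hpos => not_lt.mp fun hkn => h k hpos hkn hk, hn.trans_le⟩

theorem eventually_firstReturn_eq_firstReturn' (h : ∀ᶠ n in atTop, n < firstReturn' x n) :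
    ∀ᶠ n in atTop, firstReturn x n = firstReturn' x n := by
  obtain ⟨N, hN⟩ := eventually_atTop.mp h
  filter_upwards [eventually_gt_atTop 0, eventually_ge_atTop (2 * N ^ 2)] with n hn hNn
  refine firstReturn_eq_firstReturn' hn fun p hp hpn hreturn => ?_
  obtain ⟨m, hm, hsquare⟩ := hreturn.exists_ge_isReturnTime_self hp hpn.le hNn
  exact (hsquare.firstReturn'_le le_rfl).not_gt (hN m hm)

end ReturnTimes

theorem eventually_lt_of_liminf_log_div_pos {f : ℕ → ℕ}
    (h : 0 < atTop.liminf (fun n : ℕ => Real.log (f n) / (n : ℝ))) :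
    ∀ᶠ n in atTop, n < f n := by
  obtain ⟨a, ha, hlt⟩ := exists_between h
  have hbdd : atTop.IsBoundedUnder (· ≥ ·) (fun n : ℕ => Real.log (f n) / (n : ℝ)) :=
    isBoundedUnder_of ⟨0, fun n => div_nonneg (Real.log_natCast_nonneg _) n.cast_nonneg⟩
  have hlog : Tendsto (fun n : ℕ => Real.log n / (n : ℝ)) atTop (𝓝 0) :=
    Real.isLittleO_log_id_atTop.tendsto_div_nhds_zero.comp tendsto_natCast_atTop_atTop
  filter_upwards [eventually_lt_of_lt_liminf hlt hbdd, hlog.eventually_lt_const ha]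
    with n hfn hn
  by_contra! hle
  have hlog_le : Real.log (f n) ≤ Real.log n := by
    obtain hzero | hpos := (f n).eq_zero_or_pos
    · simpa [hzero] using Real.log_natCast_nonneg n
    · exact Real.log_le_log (mod_cast hpos) (mod_cast hle)
  exact (hn.trans hfn).not_ge (div_le_div_of_nonneg_right hlog_le n.cast_nonneg)

theorem statement_14_general {Λ : Type*} (x : ℕ → Λ)
    (h : ∀ᶠ n in atTop, n < firstReturn' x n) :
    (∀ᶠ n in atTop, firstReturn x n = firstReturn' x n) ∧
    ∀ c : ℝ,
      (Tendsto (fun n : ℕ => Real.log (firstReturn x n) / (n : ℝ)) atTop (𝓝 c) ↔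
        Tendsto (fun n : ℕ => Real.log (firstReturn' x n) / (n : ℝ)) atTop (𝓝 c)) := by
  have heq := eventually_firstReturn_eq_firstReturn' h
  exact ⟨heq, fun c => tendsto_congr' (heq.mono fun n hn => by simp only [hn])⟩

theorem statement_14
    {Λ : Type*} [Fintype Λ] (x : ℕ → Λ)
    (hrec : ∀ n : ℕ, 1 ≤ n → ∃ k, n ≤ k ∧ ∀ i < n, x (k + i) = x i)
    (hliminf : 0 < atTop.liminf (fun n : ℕ => Real.log (firstReturn' x n) / (n : ℝ))) :
    (∀ᶠ n in atTop, firstReturn x n = firstReturn' x n) ∧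
    ∀ c : ℝ,
      (Tendsto (fun n : ℕ => Real.log (firstReturn x n) / (n : ℝ)) atTop (𝓝 c) ↔
        Tendsto (fun n : ℕ => Real.log (firstReturn' x n) / (n : ℝ)) atTop (𝓝 c)) :=
  statement_14_general x (eventually_lt_of_liminf_log_div_pos hliminf)
end
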